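/- Let k be an algebraically closed field of characteristic 0 and let A be a finitely generated commutative k-algebra which is an integral domain. Let J be a non-zero Lie ideal of Der_k(A) and let P be a maximal ideal of A which is a nonsingular point, i.e., the localization A_P of A at P is formally smooth over k. Then there exist μ ∈ J and f ∈ A such that μ(f) ∉ P (the function μ(f) does not vanish at P). -/

import Mathlib

set_option synthInstance.maxHeartbeats 400000

/-!
Since the residue field of `P` is smooth over `k`, some derivation `A → P / P²` restricts to the
quotient map on `P`. Since `Ω[A⁄k]` is projective at a nonsingular point, this derivation lifts, up
to a factor `h ∉ P`, through a free cover of `P` and yields an Euler derivation: some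
`E ∈ P · Der(A)` which acts on `P / P²` as multiplication by `h`, hence on `P^m / P^(m+1)` as
multiplication by `m * h`.

Suppose every element of a Lie ideal `J` vanishes at `P`, and that `J` maps `A` into `P^m` for some
`m ≥ 1`. For `μ ∈ J` and any derivation `D`, the identity `D (μ f) = ⁅D, μ⁆ f + μ (D f)` shows
`D (μ f) ∈ P^m`, so `E (μ f) ∈ P^(m+1)`. As `m * h ∉ P`, this forces `μ f ∈ P^(m+1)`. By induction
`J` maps `A` into `⋂ P^m`, which is zero by Krull's intersection theorem.
-/

section Lifting

variable {R : Type*} [CommRing R] (S : Submonoid R) (Rₛ : Type*) [CommRing Rₛ] [Algebra R Rₛ]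
  [IsLocalization S Rₛ]
  {M Mₛ Q N : Type*} [AddCommGroup M] [Module R M] [AddCommGroup Mₛ] [Module R Mₛ] [Module Rₛ Mₛ]
  [IsScalarTower R Rₛ Mₛ] [AddCommGroup Q] [Module R Q] [AddCommGroup N] [Module R N]

theorem exists_comp_eq_smul_of_projective_isLocalizedModule [Module.FinitePresentation R M]
    [Module.Projective Rₛ Mₛ] (f : M →ₗ[R] Mₛ) [IsLocalizedModule S f] {q : Q →ₗ[R] N}
    (hq : Function.Surjective q) (φ : M →ₗ[R] N) :
    ∃ (s : S) (ψ : M →ₗ[R] Q), q ∘ₗ ψ = s • φ := by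
  let ιQ := TensorProduct.mk R Rₛ Q 1
  let ιN := TensorProduct.mk R Rₛ N 1
  let qₛ := IsLocalizedModule.mapExtendScalars S ιQ ιN Rₛ q
  let φₛ := IsLocalizedModule.mapExtendScalars S f ιN Rₛ φ
  obtain ⟨ψₛ, hψₛ⟩ := Module.projective_lifting_property qₛ φₛ
    (IsLocalizedModule.map_surjective S ιQ ιN q hq)
  obtain ⟨ψ, s, hψ⟩ := Module.FinitePresentation.exists_lift_of_isLocalizedModule S ιQ
    (ψₛ.restrictScalars R ∘ₗ f)
  have hcomp : ιN ∘ₗ (q ∘ₗ ψ) = ιN ∘ₗ (s • φ) := by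
    ext m
    calc ιN (q (ψ m)) = qₛ (ιQ (ψ m)) := (IsLocalizedModule.map_apply S ιQ ιN q _).symm
      _ = qₛ (s • ψₛ (f m)) := congrArg qₛ (LinearMap.congr_fun hψ m)
      _ = s • qₛ (ψₛ (f m)) := (qₛ.restrictScalars R).map_smul (s : R) _
      _ = s • φₛ (f m) := congrArg (s • ·) (LinearMap.congr_fun hψₛ (f m))
      _ = s • ιN (φ m) := congrArg (s • ·) (IsLocalizedModule.map_apply S f ιN φ m)
      _ = ιN (s • φ m) := (ιN.map_smul (s : R) _).symm
  obtain ⟨t, ht⟩ := Module.Finite.exists_smul_of_comp_eq_of_isLocalizedModule S ιN _ _ hcomp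
  exact ⟨t * s, t • ψ, by rw [mul_smul, ← ht, LinearMap.comp_smul]⟩

end Lifting

section EulerDerivation

variable {k A : Type*} [CommRing k] [CommRing A] [Algebra k A]

theorem exists_derivation_cotangent_of_formallySmooth_quotient (I : Ideal A)
    [Algebra.FormallySmooth k (A ⧸ I)] :
    ∃ θ : Derivation k A I.Cotangent, ∀ y : I, θ y = I.toCotangent y := by
  let π : A ⧸ I →ₐ[k] (A ⧸ I ^ 2) ⧸ I.cotangentIdeal :=
    Ideal.Quotient.liftₐ I (IsScalarTower.toAlgHom k A _) fun y hy ↦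
      Ideal.Quotient.eq_zero_iff_mem.mpr (Ideal.mk_mem_cotangentIdeal.mpr hy)
  -- A splitting `σ` of `A ⧸ I ^ 2 → A ⧸ I` makes `a ↦ σ a - a` a derivation into the square-zero
  -- ideal `I ⧸ I ^ 2`; on `I` it is minus the quotient map.
  let σ := Algebra.FormallySmooth.lift I.cotangentIdeal ⟨2, I.cotangentIdeal_square⟩ π
  let δ : Derivation k A I.cotangentIdeal :=
    derivationToSquareZeroOfLift I.cotangentIdeal I.cotangentIdeal_square
      (σ.comp (Ideal.Quotient.mkₐ k I)) (AlgHom.ext fun a ↦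
        Algebra.FormallySmooth.mk_lift _ _ π (Ideal.Quotient.mk I a))
  have hδ (y : I) : δ y = -I.cotangentEquivIdeal (I.toCotangent y) := by
    ext
    have hσ : σ (Ideal.Quotient.mk I y) = 0 := by
      rw [Ideal.Quotient.eq_zero_iff_mem.mpr y.2, map_zero]
    simp [δ, derivationToSquareZeroOfLift_apply, hσ]
  exact ⟨-I.cotangentEquivIdeal.symm.toLinearMap.compDer δ, fun y ↦ by simp [hδ]⟩

/-- A derivation in `I · Der(A)` that acts on `I / I²` as multiplication by `h`, like the Euler
vector field `∑ xᵢ ∂ᵢ` (with `h = 1`) for the ideal of the origin of affine space. Allowing an `h`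
other than `1` leaves room for clearing denominators. -/
structure IsEulerDerivation (I : Ideal A) (h : A) (E : Derivation k A A) : Prop where
  mem_smul_top : E ∈ I • (⊤ : Submodule A (Derivation k A A))
  apply_sub_mem : ∀ y ∈ I, E y - h * y ∈ I ^ 2

theorem compDer_mem_smul_top {ι : Type*} [Finite ι] {I : Ideal A} (π : (ι → A) →ₗ[A] I)
    (d : Derivation k A (ι → A)) :
    (I.subtype ∘ₗ π).compDer d ∈ I • (⊤ : Submodule A (Derivation k A A)) := by
  classical
  have := Fintype.ofFinite ι
  have hsum : I.subtype ∘ₗ π = ∑ i, (π (Pi.single i 1) : A) • LinearMap.proj i := by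
    ext i
    simp [Pi.single_apply]
  have hder : (I.subtype ∘ₗ π).compDer d =
      ∑ i, (π (Pi.single i 1) : A) • (LinearMap.proj i : (ι → A) →ₗ[A] A).compDer d := by
    change Derivation.llcomp _ d = _
    rw [hsum, map_sum, LinearMap.sum_apply]
    simp only [map_smul, LinearMap.smul_apply]
    rfl
  rw [hder]
  exact Submodule.sum_mem _ fun i _ ↦ Submodule.smul_mem_smul (π _).2 trivial

theorem exists_isEulerDerivation (S : Submonoid A) (B : Type*) [CommRing B] [Algebra A B]
    [Algebra k B] [IsScalarTower k A B] [IsLocalization S B]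
    [Module.FinitePresentation A Ω[A⁄k]] [Module.Projective B Ω[B⁄k]]
    {I : Ideal A} (hI : I.FG) [Algebra.FormallySmooth k (A ⧸ I)] :
    ∃ h ∈ S, ∃ E : Derivation k A A, IsEulerDerivation I h E := by
  obtain ⟨θ, hθ⟩ := exists_derivation_cotangent_of_formallySmooth_quotient (k := k) I
  have : Module.Finite A I := Module.Finite.of_fg hI
  obtain ⟨n, π, hπ⟩ := Module.Finite.exists_fin' A I
  obtain ⟨s, ψ, hψ⟩ := exists_comp_eq_smul_of_projective_isLocalizedModule S B
    (KaehlerDifferential.map k k A B) (q := I.toCotangent ∘ₗ π)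
    (I.toCotangent_surjective.comp hπ) θ.liftKaehlerDifferential
  refine ⟨s, s.2, (I.subtype ∘ₗ π).compDer (ψ.compDer (KaehlerDifferential.D k A)),
    compDer_mem_smul_top π _, fun y hy ↦ ?_⟩
  have hcot : I.toCotangent (π (ψ (KaehlerDifferential.D k A y))) =
      I.toCotangent ((s : A) • ⟨y, hy⟩) := by
    rw [map_smul, ← hθ ⟨y, hy⟩, ← θ.liftKaehlerDifferential_comp_D]
    exact LinearMap.congr_fun hψ (KaehlerDifferential.D k A y)
  exact I.toCotangent_eq.mp hcot

theorem apply_mem_mul_of_mem_smul_top {I K : Ideal A} {E : Derivation k A A}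
    (hE : E ∈ I • (⊤ : Submodule A (Derivation k A A))) {g : A}
    (hg : ∀ D : Derivation k A A, D g ∈ K) : E g ∈ I * K := by
  induction hE using Submodule.smul_induction_on' with
  | smul x hx D _ => exact Ideal.mul_mem_mul hx (hg D)
  | add D₁ _ D₂ _ h₁ h₂ => exact add_mem h₁ h₂

namespace IsEulerDerivation

variable {I : Ideal A} {h : A} {E : Derivation k A A}

theorem apply_sub_mem_pow (hE : IsEulerDerivation I h E) (m : ℕ) :
    ∀ y ∈ I ^ m, E y - m * h * y ∈ I ^ (m + 1) := by
  induction m with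
  | zero =>
    intro y _
    simpa using apply_mem_mul_of_mem_smul_top (K := ⊤) hE.mem_smul_top fun _ ↦ trivial
  | succ m ih =>
    intro y hy
    rw [pow_succ] at hy
    induction hy using Submodule.mul_induction_on' with
    | mem_mul_mem a ha b hb =>
      have hleft : (E a - m * h * a) * b ∈ I ^ (m + 1 + 1) := Ideal.mul_mem_mul (ih a ha) hb
      have hright : a * (E b - h * b) ∈ I ^ (m + 1 + 1) := by
        rw [add_assoc, pow_add]
        exact Ideal.mul_mem_mul ha (hE.apply_sub_mem b hb)
      convert add_mem hleft hright using 1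
      rw [E.leibniz]
      push_cast
      simp only [smul_eq_mul]
      ring
    | add a _ b _ ha hb =>
      convert add_mem ha hb using 1
      rw [map_add]
      ring

theorem mem_pow_succ_of_forall_derivation_mem_pow {P : Ideal A} [P.IsMaximal]
    [CharZero (A ⧸ P)] (hE : IsEulerDerivation P h E) (hh : h ∉ P) {m : ℕ} (hm : m ≠ 0) {g : A}
    (hg : g ∈ P ^ m) (hDg : ∀ D : Derivation k A A, D g ∈ P ^ m) : g ∈ P ^ (m + 1) := by
  have hEg : E g ∈ P ^ (m + 1) := by
    rw [pow_succ']
    exact apply_mem_mul_of_mem_smul_top hE.mem_smul_top hDg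
  have hmh : m * h * g ∈ P ^ (m + 1) := by
    simpa using sub_mem hEg (hE.apply_sub_mem_pow m g hg)
  have hm' : (m : A) ∉ P := by
    rwa [← Ideal.Quotient.eq_zero_iff_mem, map_natCast, Nat.cast_eq_zero]
  exact (Ideal.IsMaximal.mul_mem_pow P hmh).resolve_left
    (Ideal.IsPrime.mul_notMem inferInstance hm' hh)

end IsEulerDerivation

end EulerDerivation

section LieIdeal

variable {k A : Type*} [CommRing k] [CommRing A] [Algebra k A] {J : LieIdeal k (Derivation k A A)}

theorem derivation_apply_mem_of_forall_lieIdeal_apply_mem {I : Ideal A}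
    (hJ : ∀ μ ∈ J, ∀ f, μ f ∈ I) {μ : Derivation k A A} (hμ : μ ∈ J) (D : Derivation k A A)
    (f : A) : D (μ f) ∈ I := by
  have hlie : ⁅D, μ⁆ f ∈ I := hJ _ (lie_mem_right k _ J D μ hμ) f
  simpa [Derivation.commutator_apply] using add_mem hlie (hJ μ hμ (D f))

theorem IsEulerDerivation.lieIdeal_apply_mem_pow {P : Ideal A} [P.IsMaximal] [CharZero (A ⧸ P)]
    {h : A} {E : Derivation k A A} (hE : IsEulerDerivation P h E) (hh : h ∉ P)
    (hJ : ∀ μ ∈ J, ∀ f, μ f ∈ P) (m : ℕ) : ∀ μ ∈ J, ∀ f, μ f ∈ P ^ m := by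
  induction m with
  | zero => simp
  | succ m ih =>
    obtain rfl | hm := eq_or_ne m 0
    · simpa using hJ
    · exact fun μ hμ f ↦ hE.mem_pow_succ_of_forall_derivation_mem_pow hh hm (ih μ hμ f) fun D ↦
        derivation_apply_mem_of_forall_lieIdeal_apply_mem ih hμ D f

theorem lieIdeal_eq_bot_of_forall_apply_mem_pow [IsNoetherianRing A] [IsDomain A] {I : Ideal A}
    (hI : I ≠ ⊤) (hJ : ∀ m : ℕ, ∀ μ ∈ J, ∀ f, μ f ∈ I ^ m) : J = ⊥ := by
  refine (LieSubmodule.eq_bot_iff J).mpr fun μ hμ ↦ Derivation.ext fun f ↦ ?_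
  have hf : μ f ∈ ⨅ m, I ^ m := Submodule.mem_iInf _ |>.mpr fun m ↦ hJ m μ hμ f
  rwa [Ideal.iInf_pow_eq_bot_of_isDomain I hI, Ideal.mem_bot] at hf

end LieIdeal

theorem exists_derivation_nonvanishing_at_nonsingular_point_general
    {k : Type*} [Field k] [CharZero k] {A : Type*} [CommRing A] [IsDomain A] [Algebra k A]
    [Algebra.EssFiniteType k A] {J : LieIdeal k (Derivation k A A)} (hJ : J ≠ ⊥)
    (P : Ideal A) [P.IsMaximal] [Algebra.FormallySmooth k (Localization.AtPrime P)] :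
    ∃ μ ∈ J, ∃ f : A, μ f ∉ P := by
  let _ := Ideal.Quotient.field P
  have : IsNoetherianRing A := Algebra.EssFiniteType.isNoetherianRing k A
  have : CharZero (A ⧸ P) := charZero_of_injective_algebraMap (algebraMap k (A ⧸ P)).injective
  have : Algebra.EssFiniteType k (A ⧸ P) := .comp k A (A ⧸ P)
  have : Module.FinitePresentation A Ω[A⁄k] := Module.finitePresentation_of_finite A _
  obtain ⟨h, hh, E, hE⟩ := exists_isEulerDerivation (k := k) P.primeCompl (Localization.AtPrime P)
    (IsNoetherian.noetherian P)
  by_contra! hvanish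
  exact hJ <| lieIdeal_eq_bot_of_forall_apply_mem_pow (Ideal.IsMaximal.ne_top ‹_›)
    (hE.lieIdeal_apply_mem_pow hh hvanish)

/-- Local property of ideals: every non-zero Lie ideal of `Der_k(A)` contains a derivation
that does not vanish at a given nonsingular point `P`. -/
theorem exists_derivation_nonvanishing_at_nonsingular_point.{u}
    (k : Type u) [Field k] [IsAlgClosed k] [CharZero k]
    (A : Type u) [CommRing A] [IsDomain A] [Algebra k A] [Algebra.FiniteType k A]
    (J : LieIdeal k (Derivation k A A)) (hJ : J ≠ ⊥)
    (P : Ideal A) [P.IsMaximal]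
    (hsmooth : Algebra.FormallySmooth k (Localization.AtPrime P)) :
    ∃ μ ∈ J, ∃ f : A, μ f ∉ P := by
  exact exists_derivation_nonvanishing_at_nonsingular_point_general hJ P
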